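/- The number of triples (x, y, z) of elements of Sym_5 with x of order 2, y of order 4, z of order 5 and x*y*z = 1 is exactly 120. -/

import Mathlib

/-!
In `Sym_n` with `n ≥ 3`, fix an `n`-cycle `c`. For a transposition `x`, the product `x * c` is an
`(n - 1)`-cycle exactly when it has a fixed point `k`, which means `x = swap k (c k)`; these `n`
transpositions are distinct. Letting `c⁻¹` run over the `(n - 1)!` many `n`-cycles, there are `n!`
triples `(x, y, z)` with `x * y * z = 1` formed by a transposition, an `(n - 1)`-cycle and an
`n`-cycle.

In `Sym_5` an element of order 4 is a 4-cycle and an element of order 5 is a 5-cycle. Their signs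
are `-1` and `1`, so `x * y * z = 1` forces the involution `x` to be odd, that is, a transposition.
-/

section

open Equiv Equiv.Perm Finset
open scoped Nat

lemma card_mul_mul_eq_one_of_fiber {G : Type*} [Group G] [Finite G] {p q r : G → Prop} {m : ℕ}
    (hm : ∀ z, r z → Nat.card {x // p x ∧ q (x⁻¹ * z⁻¹)} = m) :
    Nat.card {t : G × G × G // p t.1 ∧ q t.2.1 ∧ r t.2.2 ∧ t.1 * t.2.1 * t.2.2 = 1} =
      Nat.card {z // r z} * m := by
  have solve {x y z : G} (h : x * y * z = 1) : x⁻¹ * z⁻¹ = y := by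
    rw [← eq_inv_of_mul_eq_one_left h, inv_mul_cancel_left]
  let e : {t : G × G × G // p t.1 ∧ q t.2.1 ∧ r t.2.2 ∧ t.1 * t.2.1 * t.2.2 = 1} ≃
      Σ z : {z // r z}, {x // p x ∧ q (x⁻¹ * z.1⁻¹)} :=
    { toFun t := ⟨⟨t.1.2.2, t.2.2.2.1⟩, t.1.1, t.2.1, (solve t.2.2.2.2).symm ▸ t.2.2.1⟩
      invFun s := ⟨(s.2.1, s.2.1⁻¹ * s.1.1⁻¹, s.1.1), s.2.2.1, s.2.2.2, s.1.2, by simp⟩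
      left_inv := fun ⟨⟨x, y, z⟩, _, _, _, h⟩ => by simp only [solve h]
      right_inv _ := rfl }
  have := Fintype.ofFinite {z // r z}
  rw [Nat.card_congr e, Nat.card_sigma, sum_congr rfl fun z _ => hm z.1 z.2, sum_const, card_univ,
    smul_eq_mul, Nat.card_eq_fintype_card]

variable {α : Type*} [DecidableEq α]

lemma isSwap_inv_eq_self {x : Perm α} (hx : x.IsSwap) : x⁻¹ = x := by
  obtain ⟨i, j, -, rfl⟩ := hx
  exact swap_inv i j

lemma injective_swap_apply {c : Perm α} (hc : ∀ k, c (c k) ≠ k) :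
    Function.Injective fun k => swap k (c k) := by
  intro i j (hij : swap i (c i) = swap j (c j))
  have hi : c i = swap j (c j) i := by rw [← hij, swap_apply_left]
  by_contra hne
  by_cases hicj : i = c j
  · rw [hicj, swap_apply_right] at hi
    exact hc (c j) (congrArg c hi)
  · rw [swap_apply_of_ne_of_ne hne hicj] at hi
    exact hc i (by rw [hi, hi])

lemma eq_swap_of_mul_apply_eq_self {x c : Perm α} {k : α} (hx : x.IsSwap) (hk : c k ≠ k)
    (hfix : (x * c) k = k) : x = swap k (c k) := by
  have hxk : x k = c k := by
    rw [← isSwap_inv_eq_self hx, inv_eq_iff_eq]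
    exact hfix.symm
  rw [← hxk]
  refine hx.isCycle.eq_swap_of_apply_apply_eq_self (hxk ▸ hk) ?_
  rw [hxk]
  exact hfix

variable [Fintype α]

lemma apply_apply_ne_of_isCycle {c : Perm α} (hc : c.IsCycle) (hcard : 3 ≤ #c.support) {k : α}
    (hk : c k ≠ k) : c (c k) ≠ k := by
  intro h
  rw [hc.eq_swap_of_apply_apply_eq_self hk h, card_support_swap hk.symm] at hcard
  omega

lemma cycleType_swap_apply_mul {c : Perm α} (hc : c.IsCycle) (hcard : 3 ≤ #c.support) {k : α}
    (hk : c k ≠ k) : (swap k (c k) * c).cycleType = {#c.support - 1} := by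
  have hck := apply_apply_ne_of_isCycle hc hcard hk
  rw [(hc.swap_mul hk hck).cycleType, support_swap_mul_eq c k hck,
    card_sdiff_of_subset (singleton_subset_iff.mpr (mem_support.mpr hk)), card_singleton]

lemma isSwap_and_cycleType_mul_iff {c : Perm α} (hc : c.IsCycle) (hsupp : c.support = univ)
    (hα : 3 ≤ Fintype.card α) (x : Perm α) :
    x.IsSwap ∧ (x * c).cycleType = {Fintype.card α - 1} ↔ x ∈ Set.range fun k => swap k (c k) := by
  have hmove (k : α) : c k ≠ k := mem_support.mp (hsupp ▸ mem_univ k)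
  have hcard : #c.support = Fintype.card α := by rw [hsupp, card_univ]
  constructor
  · rintro ⟨hx, hxc⟩
    have hlt : #(x * c).support < Fintype.card α := by
      rw [← sum_cycleType, hxc, Multiset.sum_singleton]
      omega
    obtain ⟨k, hk⟩ : ∃ k, k ∉ (x * c).support := by
      by_contra! h
      exact hlt.ne (by rw [eq_univ_of_forall h, card_univ])
    exact ⟨k, (eq_swap_of_mul_apply_eq_self hx (hmove k) (notMem_support.mp hk)).symm⟩
  · rintro ⟨k, rfl⟩
    exact ⟨swap_isSwap_iff.mpr (hmove k).symm,
      hcard ▸ cycleType_swap_apply_mul hc (hcard ▸ hα) (hmove k)⟩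

lemma card_isSwap_and_cycleType_mul {c : Perm α} (hc : c.IsCycle) (hsupp : c.support = univ)
    (hα : 3 ≤ Fintype.card α) :
    Nat.card {x : Perm α // x.IsSwap ∧ (x * c).cycleType = {Fintype.card α - 1}} =
      Fintype.card α := by
  have hinj : Function.Injective fun k => swap k (c k) := injective_swap_apply fun k =>
    apply_apply_ne_of_isCycle hc (by rwa [hsupp]) (mem_support.mp (hsupp ▸ mem_univ k))
  rw [Nat.card_congr (subtypeEquivRight (isSwap_and_cycleType_mul_iff hc hsupp hα)),
    ← Nat.card_eq_fintype_card]
  exact Nat.card_range_of_injective hinj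

theorem card_isSwap_cycle_cycle_mul_eq_one (hα : 3 ≤ Fintype.card α) :
    Nat.card {t : Perm α × Perm α × Perm α // t.1.IsSwap ∧
      t.2.1.cycleType = {Fintype.card α - 1} ∧ t.2.2.cycleType = {Fintype.card α} ∧
      t.1 * t.2.1 * t.2.2 = 1} = (Fintype.card α)! := by
  have hfiber (z : Perm α) (hz : z.cycleType = {Fintype.card α}) :
      Nat.card {x : Perm α // x.IsSwap ∧ (x⁻¹ * z⁻¹).cycleType = {Fintype.card α - 1}} =
        Fintype.card α := by
    have hcycle : z⁻¹.IsCycle := by rw [← card_cycleType_eq_one, cycleType_inv, hz]; rfl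
    have hsupp : z⁻¹.support = univ := by
      rw [support_inv, ← card_eq_iff_eq_univ, ← sum_cycleType, hz, Multiset.sum_singleton]
    refine (Nat.card_congr (subtypeEquivRight fun x => and_congr_right fun hx => ?_)).trans
      (card_isSwap_and_cycleType_mul hcycle hsupp hα)
    rw [isSwap_inv_eq_self hx]
  have hcycles : Nat.card {z : Perm α // z.cycleType = {Fintype.card α}} =
      (Fintype.card α - 1)! := by
    rw [Nat.card_eq_fintype_card, Fintype.card_subtype,
      card_of_cycleType_singleton (by omega) le_rfl, Nat.choose_self, mul_one]
  rw [card_mul_mul_eq_one_of_fiber (p := IsSwap) (q := (cycleType · = {Fintype.card α - 1}))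
    hfiber, hcycles, mul_comm, Nat.mul_factorial_pred (by omega)]

lemma orderOf_eq_of_cycleType_eq_singleton {σ : Perm α} {n : ℕ} (h : σ.cycleType = {n}) :
    orderOf σ = n := by
  rw [← lcm_cycleType, h, Multiset.lcm_singleton, normalize_eq]

lemma cycleType_eq_singleton_iff_orderOf_eq_prime_pow {σ : Perm α} {p k : ℕ} (hp : p.Prime)
    (hα : Fintype.card α < p ^ (k + 1) + 2) :
    σ.cycleType = {p ^ (k + 1)} ↔ orderOf σ = p ^ (k + 1) := by
  refine ⟨orderOf_eq_of_cycleType_eq_singleton, fun h => ?_⟩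
  have hmem : p ^ (k + 1) ∈ σ.cycleType := by
    by_contra hnot
    have hdvd : orderOf σ ∣ p ^ k := by
      rw [← lcm_cycleType, Multiset.lcm_dvd]
      intro n hn
      obtain ⟨i, hi, rfl⟩ := (Nat.dvd_prime_pow hp).mp (h ▸ dvd_of_mem_cycleType hn)
      have hik : i ≠ k + 1 := fun hik => hnot (hik ▸ hn)
      exact pow_dvd_pow p (by omega)
    rw [h, Nat.pow_dvd_pow_iff_le_right hp.one_lt] at hdvd
    omega
  obtain ⟨rest, hrest⟩ := Multiset.exists_cons_of_mem hmem
  have hsum : p ^ (k + 1) + rest.sum ≤ Fintype.card α := by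
    rw [← Multiset.sum_cons, ← hrest]
    exact σ.sum_cycleType_le
  have hzero : rest = 0 := Multiset.eq_zero_of_forall_notMem fun n hn => by
    have htwo : 2 ≤ n := two_le_of_mem_cycleType (hrest ▸ Multiset.mem_cons_of_mem hn)
    have hle : n ≤ rest.sum := Multiset.le_sum_of_mem hn
    omega
  rw [hrest, hzero, Multiset.cons_zero]

lemma isSwap_iff_orderOf_eq_two_and_sign {x : Perm α} (hα : Fintype.card α < 6) :
    x.IsSwap ↔ orderOf x = 2 ∧ sign x = -1 := by
  refine ⟨fun hx => ⟨hx.orderOf, hx.sign_eq⟩, fun ⟨hx, hsign⟩ => ?_⟩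
  obtain ⟨n, hn⟩ := cycleType_prime_order (hx ▸ Nat.prime_two)
  rw [hx] at hn
  have hn2 : n < 2 := by
    have hsum := x.sum_cycleType_le
    rw [hn, Multiset.sum_replicate, smul_eq_mul] at hsum
    omega
  interval_cases n
  · exact isSwap_iff_cycleType.mpr hn
  · rw [sign_of_cycleType, hn] at hsign
    exact absurd hsign (by decide)

lemma orderOf_two_four_five_iff_cycleType {x y z : Perm (Fin 5)} (h : x * y * z = 1) :
    orderOf x = 2 ∧ orderOf y = 4 ∧ orderOf z = 5 ↔
      x.IsSwap ∧ y.cycleType = {4} ∧ z.cycleType = {5} := by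
  have hy : y.cycleType = {4} ↔ orderOf y = 4 :=
    cycleType_eq_singleton_iff_orderOf_eq_prime_pow (k := 1) Nat.prime_two (by simp)
  have hz : z.cycleType = {5} ↔ orderOf z = 5 :=
    cycleType_eq_singleton_iff_orderOf_eq_prime_pow (k := 0) Nat.prime_five (by simp)
  rw [← hy, ← hz, isSwap_iff_orderOf_eq_two_and_sign (by simp)]
  refine ⟨fun ⟨hx, hy4, hz5⟩ => ⟨⟨hx, ?_⟩, hy4, hz5⟩, fun ⟨⟨hx, _⟩, hyz⟩ => ⟨hx, hyz⟩⟩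
  have hsy : sign y = -1 := by rw [sign_of_cycleType, hy4]; decide
  have hsz : sign z = 1 := by rw [sign_of_cycleType, hz5]; decide
  simpa [hsy, hsz, neg_eq_iff_eq_neg] using congrArg sign h

end

theorem card_245_triples_sym5 :
    Nat.card {t : Equiv.Perm (Fin 5) × Equiv.Perm (Fin 5) × Equiv.Perm (Fin 5) //
      orderOf t.1 = 2 ∧ orderOf t.2.1 = 4 ∧ orderOf t.2.2 = 5 ∧
      t.1 * t.2.1 * t.2.2 = 1} = 120 := by
  have hcount := card_isSwap_cycle_cycle_mul_eq_one (α := Fin 5) (by simp)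
  rw [Fintype.card_fin] at hcount
  refine (Nat.card_congr (Equiv.subtypeEquivRight fun t => ?_)).trans hcount
  simp only [← and_assoc]
  refine and_congr_left fun h => ?_
  simpa only [and_assoc] using orderOf_two_four_five_iff_cycleType h
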